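/- Let 0 < d < n and let Ω ⊂ ℝⁿ be open with d-Ahlfors regular boundary. Let ξ ∈ ∂Ω, 0 < R < 2·diam ∂Ω, 1 ≤ β ≤ ∞, 1 ≤ p ≤ ∞, 0 < c < 1 and s ∈ ℝ. Suppose u ∈ L^β_loc(Ω) satisfies ∫_{B(ξ,R)∩Ω} W_{c,β}(u)^p δ^{d−n−ps} < ∞ (with the supremum sup W_{c,β}(u)·δ^{−s} < ∞ when p = ∞). Then: (i) if s > −(n−d), then u is integrable on K ∩ Ω for every compact K ⊂ B(ξ,R); (ii) if p = ∞ and s > 0, or if p < ∞ and s ≥ d/p, then Tr u(x) = 0 for every x ∈ B(ξ,R) ∩ ∂Ω; (iii) if p < ∞ and s ≥ 0, then Tr u(x) = 0 for σ-a.e. x ∈ B(ξ,R) ∩ ∂Ω. -/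

import Mathlib

open MeasureTheory Metric Set Filter
open scoped ENNReal NNReal Topology RealInnerProductSpace

noncomputable section

namespace Paper

/-- Euclidean space `ℝⁿ`. -/
abbrev Euc (n : ℕ) : Type := EuclideanSpace ℝ (Fin n)

variable {n : ℕ}

/-- `δ(x)`: the distance from `x` to the boundary of `Ω`. -/
def bd (Ω : Set (Euc n)) (x : Euc n) : ℝ := Metric.infDist x (frontier Ω)

/-- `σ`: the `d`-dimensional Hausdorff measure on `ℝⁿ`. -/
def hm (n : ℕ) (d : ℝ) : Measure (Euc n) := μH[d]

/-- `Γ ⊆ ℝⁿ` is `d`-Ahlfors regular with constant `A`: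
`(1/A) rᵈ ≤ σ(B(ξ,r) ∩ Γ) ≤ A rᵈ` for all `ξ ∈ Γ` and `0 < r ≤ diam Γ`. -/
def AhlforsRegular (d A : ℝ) (Γ : Set (Euc n)) : Prop :=
  Γ.Nonempty ∧ 0 < A ∧
    ∀ ξ ∈ Γ, ∀ r : ℝ, 0 < r → ENNReal.ofReal r ≤ EMetric.diam Γ →
      ENNReal.ofReal (r ^ d / A) ≤ hm n d (Metric.ball ξ r ∩ Γ) ∧
        hm n d (Metric.ball ξ r ∩ Γ) ≤ ENNReal.ofReal (A * r ^ d)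

/-- A `λ`-carrot path from `x ∈ ∂Ω` to `y ∈ Ω`: a rectifiable curve, parameterized by
arc length (hence `1`-Lipschitz), from `x` to `y`, staying in `Ω ∪ {x}`, with
`δ(ζ(t)) ≥ λ t`. -/
def IsCarrotPath (Ω : Set (Euc n)) (lam : ℝ) (x y : Euc n) : Prop :=
  ∃ (T : ℝ) (ζ : ℝ → Euc n), 0 ≤ T ∧ ζ 0 = x ∧ ζ T = y ∧
    LipschitzOnWith 1 ζ (Set.Icc 0 T) ∧
    (∀ t ∈ Set.Icc (0 : ℝ) T, ζ t ∈ Ω ∪ {x}) ∧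
    (∀ t ∈ Set.Icc (0 : ℝ) T, lam * t ≤ bd Ω (ζ t))

/-- `y ∈ Ω` is a `(θ,λ,N)`-weak local John point. -/
def IsWLJPoint (Ω : Set (Euc n)) (d θ lam N : ℝ) (y : Euc n) : Prop :=
  ∃ F : Set (Euc n), MeasurableSet F ∧
    F ⊆ Metric.ball y (N * bd Ω y) ∩ frontier Ω ∧
    ENNReal.ofReal θ * hm n d (Metric.ball y (N * bd Ω y) ∩ frontier Ω) ≤ hm n d F ∧
    ∀ x ∈ F, IsCarrotPath Ω lam x y

/-- The weak local John condition with specified parameters. -/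
def WeakLocalJohnWith (Ω : Set (Euc n)) (d θ lam N : ℝ) : Prop :=
  0 < θ ∧ θ ≤ 1 ∧ 0 < lam ∧ lam ≤ 1 ∧ 2 ≤ N ∧ ∀ y ∈ Ω, IsWLJPoint Ω d θ lam N y

/-- `Ω` is a weak local John domain. -/
def WeakLocalJohn (Ω : Set (Euc n)) (d : ℝ) : Prop :=
  ∃ θ lam N : ℝ, WeakLocalJohnWith Ω d θ lam N

/-- The interior corkscrew condition. -/
def InteriorCorkscrew (Ω : Set (Euc n)) : Prop :=
  ∃ ε : ℝ, 0 < ε ∧ ε < 1 ∧ ∀ x ∈ frontier Ω, ∀ r : ℝ, 0 < r →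
    ENNReal.ofReal r < EMetric.diam Ω →
    ∃ z : Euc n, z ∈ Metric.ball x r ∧ Metric.ball z (ε * r) ⊆ Ω

/-- The Harnack chain condition. -/
def HarnackChainCond (Ω : Set (Euc n)) : Prop :=
  ∃ (M m : ℝ) (Nf : ℝ → ℕ), 1 ≤ M ∧ 0 < m ∧ m < 1 ∧
    ∀ x ∈ Ω, ∀ y ∈ Ω,
      ∃ (N : ℕ) (c : Fin (N + 1) → Euc n) (r : Fin (N + 1) → ℝ),
        N ≤ Nf (dist x y / min (bd Ω x) (bd Ω y)) ∧
        x ∈ Metric.ball (c 0) (r 0) ∧ y ∈ Metric.ball (c (Fin.last N)) (r (Fin.last N)) ∧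
        (∀ i : Fin N,
          (Metric.ball (c i.castSucc) (r i.castSucc) ∩ Metric.ball (c i.succ) (r i.succ)).Nonempty) ∧
        ∀ i : Fin (N + 1), 0 < r i ∧ Metric.ball (c i) (r i) ⊆ Ω ∧
          m * (2 * r i) ≤ bd Ω (c i) - r i ∧ bd Ω (c i) - r i ≤ M * (2 * r i)

/-- The weighted ellipticity conditions
`λ δ(x)^{d+1-n} |ξ|² ≤ ξ·A(x)ξ` and `|η·A(x)ξ| ≤ Λ δ(x)^{d+1-n} |ξ||η|` on `Ω`. -/
def WeaklyElliptic (Ω : Set (Euc n)) (d lam Lam : ℝ)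
    (A : Euc n → Euc n →L[ℝ] Euc n) : Prop :=
  0 < lam ∧ lam ≤ Lam ∧ (∀ v : Euc n, Measurable fun x => A x v) ∧
    ∀ x ∈ Ω, ∀ ξ η : Euc n,
      lam * bd Ω x ^ (d + 1 - (n : ℝ)) * ‖ξ‖ ^ 2 ≤ ⟪ξ, A x ξ⟫ ∧
      |⟪η, A x ξ⟫| ≤ Lam * bd Ω x ^ (d + 1 - (n : ℝ)) * ‖ξ‖ * ‖η‖

/-- A test function on the open set `Ψ`: smooth, compactly supported, support inside `Ψ`. -/
def IsTestOn (Ψ : Set (Euc n)) (φ : Euc n → ℝ) : Prop :=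
  ContDiff ℝ (⊤ : ℕ∞) φ ∧ HasCompactSupport φ ∧ tsupport φ ⊆ Ψ

/-- `g` is the weak gradient of `u` on `Ψ`:
`∫_Ψ u ∂ᵥφ = −∫_Ψ ⟪g,v⟫ φ` for all test functions `φ` and directions `v`. -/
def HasWeakGradOn (u : Euc n → ℝ) (g : Euc n → Euc n) (Ψ : Set (Euc n)) : Prop :=
  LocallyIntegrableOn u Ψ volume ∧ LocallyIntegrableOn g Ψ volume ∧
    ∀ φ : Euc n → ℝ, IsTestOn Ψ φ → ∀ v : Euc n,
      (∫ x in Ψ, u x * fderiv ℝ φ x v) = -∫ x in Ψ, ⟪g x, v⟫ * φ x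

/-- Weak formulation of `− div A ∇u = − div H` in `Ψ`, where `g` is the weak gradient
of `u`. -/
def WeakSolOn (Ψ : Set (Euc n)) (A : Euc n → Euc n →L[ℝ] Euc n)
    (u : Euc n → ℝ) (g H : Euc n → Euc n) : Prop :=
  HasWeakGradOn u g Ψ ∧ LocallyIntegrableOn H Ψ volume ∧
    ∀ φ : Euc n → ℝ, IsTestOn Ψ φ →
      (∫ x in Ψ, ⟪gradient φ x, A x (g x)⟫) = ∫ x in Ψ, ⟪gradient φ x, H x⟫

/-- `Tr u(ξ) = 0` in the averaged sense: `r^{-n} ∫_{B(ξ,r)∩Ω} |u| → 0` as `r → 0⁺`. -/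
def TrZeroAt (Ω : Set (Euc n)) (u : Euc n → ℝ) (ξ : Euc n) : Prop :=
  Tendsto (fun r : ℝ => (1 / r ^ n) * ∫ x in Metric.ball ξ r ∩ Ω, |u x|)
    (𝓝[>] 0) (𝓝 0)

/-- The Whitney average `W_{c,β} f (y) = (⨍_{B(y, c δ(y))} |f|^β)^{1/β}`
(essential supremum if `β = ∞`), as an extended nonnegative real. -/
def wAvg (Ω : Set (Euc n)) (c : ℝ) (β : ℝ≥0∞) {F : Type*} [NormedAddCommGroup F]
    (f : Euc n → F) (y : Euc n) : ℝ≥0∞ :=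
  eLpNorm f β
    ((volume (Metric.ball y (c * bd Ω y)))⁻¹ • volume.restrict (Metric.ball y (c * bd Ω y)))

/-- The weighted averaged norm `‖f‖_{L^p_{av,c,β,s}(Ψ;Ω)}`:
`(∫_Ψ (W_{c,β}f)^p δ^{d-n+p-ps})^{1/p}`, `sup_Ψ (W_{c,β}f) δ^{1-s}` if `p = ∞`. -/
def avNormOn (Ω Ψ : Set (Euc n)) (d c : ℝ) (β p : ℝ≥0∞) (s : ℝ)
    {F : Type*} [NormedAddCommGroup F] (f : Euc n → F) : ℝ≥0∞ :=
  if p = ⊤ then ⨆ y ∈ Ψ, wAvg Ω c β f y * ENNReal.ofReal (bd Ω y) ^ (1 - s)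
  else (∫⁻ y in Ψ, wAvg Ω c β f y ^ p.toReal *
      ENNReal.ofReal (bd Ω y) ^ (d - n + p.toReal - p.toReal * s)) ^ (1 / p.toReal)

/-- The weighted averaged norm `‖f‖_{L^p_{av,c,β,s}(Ω)}`. -/
def avNorm (Ω : Set (Euc n)) (d c : ℝ) (β p : ℝ≥0∞) (s : ℝ)
    {F : Type*} [NormedAddCommGroup F] (f : Euc n → F) : ℝ≥0∞ :=
  avNormOn Ω Ω d c β p s f

/-- `f ∈ L^β_loc(Ω)`. -/
def MemLLoc (Ω : Set (Euc n)) (β : ℝ≥0∞) {F : Type*} [NormedAddCommGroup F]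
    (f : Euc n → F) : Prop :=
  AEStronglyMeasurable f (volume.restrict Ω) ∧
    ∀ K : Set (Euc n), K ⊆ Ω → IsCompact K → eLpNorm f β (volume.restrict K) < ⊤

/-- The nontangential cone `γ_a(ξ) = {x ∈ Ω : |x − ξ| < (1+a) δ(x)}`. -/
def ntCone (Ω : Set (Euc n)) (a : ℝ) (ξ : Euc n) : Set (Euc n) :=
  {x | x ∈ Ω ∧ dist x ξ < (1 + a) * bd Ω x}

/-- The nontangential maximal function `N_a f (ξ) = esssup_{γ_a(ξ)} |f|`. -/
def ntMax (Ω : Set (Euc n)) (a : ℝ) {F : Type*} [NormedAddCommGroup F]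
    (f : Euc n → F) (ξ : Euc n) : ℝ≥0∞ :=
  essSup (fun x => (‖f x‖₊ : ℝ≥0∞)) (volume.restrict (ntCone Ω a ξ))

/-- The `L^q` norm of an `ℝ≥0∞`-valued function. -/
def lqNormE (q : ℝ≥0∞) {α : Type*} [MeasurableSpace α] (μ : Measure α)
    (f : α → ℝ≥0∞) : ℝ≥0∞ :=
  if q = ⊤ then essSup f μ else (∫⁻ x, f x ^ q.toReal ∂μ) ^ (1 / q.toReal)

/-- `Tr_{a,c} u (x) = U`: `x` is in the closure of its nontangential cone, and the
Whitney averages of `|u − U|` tend to `0` nontangentially. -/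
def HasNTTrace (Ω : Set (Euc n)) (a c : ℝ) (u : Euc n → ℝ) (x : Euc n) (U : ℝ) : Prop :=
  x ∈ closure (ntCone Ω a x) ∧
    Tendsto (fun y => wAvg Ω c 1 (fun z => u z - U) y) (𝓝[ntCone Ω a x] x) (𝓝 0)

section Distance

variable {Ω : Set (Euc n)}

lemma continuous_bd : Continuous (bd Ω) := continuous_infDist_pt _

lemma bd_pos (hΩ : IsOpen Ω) (hne : (frontier Ω).Nonempty) {x : Euc n} (hx : x ∈ Ω) :
    0 < bd Ω x := by
  refine (isClosed_frontier.notMem_iff_infDist_pos hne).1 fun h => ?_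
  have : x ∈ Ω ∩ frontier Ω := ⟨hx, h⟩
  rwa [hΩ.inter_frontier_eq] at this

lemma bd_le_bd_add_dist (x y : Euc n) : bd Ω x ≤ bd Ω y + dist x y :=
  infDist_le_infDist_add_dist

lemma bd_le_dist {x ζ : Euc n} (hζ : ζ ∈ frontier Ω) : bd Ω x ≤ dist x ζ :=
  infDist_le_dist_of_mem hζ

lemma ball_bd_subset (hΩ : IsOpen Ω) {x : Euc n} (hx : x ∈ Ω) : ball x (bd Ω x) ⊆ Ω := by
  rcases le_or_gt (bd Ω x) 0 with h | h
  · simp [ball_eq_empty.2 h]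
  refine (convex_ball x (bd Ω x)).isPreconnected.subset_left_of_subset_union hΩ
    isClosed_closure.isOpen_compl (disjoint_compl_right.mono_right
      (compl_subset_compl.2 subset_closure)) (fun y hy => ?_) ⟨x, mem_ball_self h, hx⟩
  have hy' : y ∉ frontier Ω := fun h' => disjoint_ball_infDist.le_bot ⟨hy, h'⟩
  by_cases hyc : y ∈ closure Ω
  · left
    by_contra hyΩ
    exact hy' ⟨hyc, by rwa [hΩ.interior_eq]⟩
  · exact Or.inr hyc

end Distance

section Averages

variable {Ω : Set (Euc n)} {c : ℝ} {β : ℝ≥0∞} {u : Euc n → ℝ}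

lemma inv_volume_mul_setLIntegral_le_wAvg (hΩ : IsOpen Ω) (hne : (frontier Ω).Nonempty)
    (hc : 0 < c) (hc1 : c < 1) (hβ : 1 ≤ β) (hu : AEStronglyMeasurable u (volume.restrict Ω))
    {y : Euc n} (hy : y ∈ Ω) :
    (volume (ball y (c * bd Ω y)))⁻¹ * ∫⁻ z in ball y (c * bd Ω y), ‖u z‖ₑ ≤ wAvg Ω c β u y := by
  have hδ := bd_pos hΩ hne hy
  have hsub : ball y (c * bd Ω y) ⊆ Ω :=
    (ball_subset_ball (by nlinarith)).trans (ball_bd_subset hΩ hy)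
  have h0 : volume (ball y (c * bd Ω y)) ≠ 0 := (measure_ball_pos volume y (by positivity)).ne'
  have : IsProbabilityMeasure ((volume (ball y (c * bd Ω y)))⁻¹ •
      volume.restrict (ball y (c * bd Ω y))) :=
    ⟨by simp [ENNReal.inv_mul_cancel h0 measure_ball_lt_top.ne]⟩
  have := eLpNorm_le_eLpNorm_of_exponent_le hβ
    (μ := (volume (ball y (c * bd Ω y)))⁻¹ • volume.restrict (ball y (c * bd Ω y)))
    ((hu.mono_measure (Measure.restrict_mono hsub le_rfl)).smul_measure _)
  rwa [eLpNorm_one_eq_lintegral_enorm, lintegral_smul_measure, smul_eq_mul] at this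

lemma setLIntegral_enorm_le_wAvg (hΩ : IsOpen Ω) (hne : (frontier Ω).Nonempty)
    (hc : 0 < c) (hc1 : c < 1) (hβ : 1 ≤ β) (hu : AEStronglyMeasurable u (volume.restrict Ω))
    {t : ℝ} (ht : 0 < t) (htc : t ≤ c / 2) {E U : Set (Euc n)} (hE : MeasurableSet E)
    (hU : MeasurableSet U) (hEΩ : E ⊆ Ω) (hUΩ : U ⊆ Ω)
    (hEU : ∀ z ∈ E, ball z (t * bd Ω z) ⊆ U) :
    (∫⁻ z in E, ‖u z‖ₑ) * ENNReal.ofReal ((t / 2) ^ n) ≤ ∫⁻ y in U, wAvg Ω c β u y := by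
  have hμ : ∀ (x : Euc n) {r : ℝ}, 0 < r →
      volume (ball x r) = ENNReal.ofReal (r ^ n) * volume (ball (0 : Euc n) 1) := fun x r hr => by
    simpa using Measure.addHaar_ball_of_pos volume x hr
  set ω := volume (ball (0 : Euc n) 1) with hω
  have hω0 : ω ≠ 0 := (measure_ball_pos volume _ one_pos).ne'
  have hωt : ω ≠ ⊤ := measure_ball_lt_top.ne
  let f : Euc n → ℝ≥0∞ := fun z => ‖hu.mk u z‖ₑ
  have hf : Measurable f := hu.stronglyMeasurable_mk.measurable.enorm
  have hfu : ∀ S ⊆ Ω, ∫⁻ z in S, ‖u z‖ₑ = ∫⁻ z in S, f z := fun S hS =>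
    lintegral_congr_ae ((ae_restrict_of_ae_restrict_of_subset hS hu.ae_eq_mk).mono
      fun z hz => by simp only [f, ← hz])
  let k : Euc n → ℝ≥0∞ := fun z => (ENNReal.ofReal ((2 * bd Ω z) ^ n) * ω)⁻¹
  have hbd : Measurable (bd Ω) := continuous_bd.measurable
  have hk : Measurable k := by fun_prop
  let H : Euc n → Euc n → ℝ≥0∞ := fun y z =>
    {q : Euc n × Euc n | dist q.1 q.2 < t * bd Ω q.2}.indicator (fun q => f q.2 * k q.2) (y, z)
  have hHm : Measurable (Function.uncurry H) := by
    refine Measurable.indicator (by fun_prop) ?_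
    exact measurableSet_lt (by fun_prop) (by fun_prop)
  calc (∫⁻ z in E, ‖u z‖ₑ) * ENNReal.ofReal ((t / 2) ^ n)
      = ∫⁻ z in E, f z * ENNReal.ofReal ((t / 2) ^ n) := by
        rw [hfu E hEΩ, lintegral_mul_const _ hf]
    _ ≤ ∫⁻ z in E, ∫⁻ y in U, H y z := by
        refine setLIntegral_mono' hE fun z hz => ?_
        have hδ := bd_pos hΩ hne (hEΩ hz)
        calc f z * ENNReal.ofReal ((t / 2) ^ n)
            = f z * k z * volume (ball z (t * bd Ω z)) := by
              rw [hμ z (by positivity), mul_assoc]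
              congr 1
              have h2 : ENNReal.ofReal ((t * bd Ω z) ^ n) =
                  ENNReal.ofReal ((t / 2) ^ n) * ENNReal.ofReal ((2 * bd Ω z) ^ n) := by
                rw [← ENNReal.ofReal_mul (by positivity), ← mul_pow]
                congr 2; ring
              have h3 : ENNReal.ofReal ((2 * bd Ω z) ^ n) * ω ≠ 0 :=
                mul_ne_zero (by simp; positivity) hω0
              have h4 : ENNReal.ofReal ((2 * bd Ω z) ^ n) * ω ≠ ⊤ :=
                ENNReal.mul_ne_top ENNReal.ofReal_ne_top hωt
              rw [h2, mul_assoc, mul_left_comm, ENNReal.inv_mul_cancel h3 h4, mul_one]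
          _ = ∫⁻ y in ball z (t * bd Ω z), f z * k z := by simp
          _ = ∫⁻ y in ball z (t * bd Ω z), H y z :=
              setLIntegral_congr_fun measurableSet_ball fun y hy => by
                simp only [H]
                rw [indicator_of_mem (by simpa using hy)]
          _ ≤ ∫⁻ y in U, H y z := lintegral_mono_set (hEU z hz)
    _ = ∫⁻ y in U, ∫⁻ z in E, H y z :=
        (lintegral_lintegral_swap hHm.aemeasurable).symm
    _ ≤ ∫⁻ y in U, wAvg Ω c β u y := by
        refine setLIntegral_mono' hU fun y hy => ?_
        have hδy := bd_pos hΩ hne (hUΩ hy)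
        refine le_trans ?_ (inv_volume_mul_setLIntegral_le_wAvg hΩ hne hc hc1 hβ hu (hUΩ hy))
        rw [hfu _ ((ball_subset_ball (by nlinarith)).trans (ball_bd_subset hΩ (hUΩ hy))),
          ← lintegral_const_mul _ hf, ← lintegral_indicator hE,
          ← lintegral_indicator measurableSet_ball]
        refine lintegral_mono fun z => indicator_le' (fun z hz => ?_) (fun _ _ => zero_le) z
        simp only [H]
        refine indicator_apply_le' (fun hyz => ?_) fun _ => zero_le
        have hyz : dist y z < t * bd Ω z := hyz
        have h1 := bd_le_bd_add_dist (Ω := Ω) z y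
        have h2 := bd_le_bd_add_dist (Ω := Ω) y z
        rw [dist_comm] at h1
        have hδz := bd_pos hΩ hne (hEΩ hz)
        have hz' : z ∈ ball y (c * bd Ω y) := by
          rw [mem_ball, dist_comm]; nlinarith
        rw [indicator_of_mem hz', mul_comm, hμ y (by positivity)]
        refine mul_le_mul_left ?_ _
        exact ENNReal.inv_le_inv.2 (mul_le_mul' (ENNReal.ofReal_le_ofReal
          (pow_le_pow_left₀ (by positivity) (by nlinarith) _)) le_rfl)

end Averages

section Regularity

variable {Ω : Set (Euc n)} {d A₀ : ℝ}

lemma AhlforsRegular.hm_inter_closedBall_lt_top {Γ : Set (Euc n)} (h : AhlforsRegular d A₀ Γ)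
    (hΓ : IsClosed Γ) {r : ℝ} (hr : 0 < r) (hrd : ENNReal.ofReal r ≤ EMetric.diam Γ)
    (x : Euc n) (R : ℝ) : hm n d (closedBall x R ∩ Γ) < ⊤ := by
  refine ((isCompact_closedBall x R).inter_right hΓ).measure_lt_top_of_nhdsWithin fun y hy => ?_
  refine ⟨ball y r ∩ Γ, ?_, (h.2.2 y hy.2 r hr hrd).2.trans_lt ENNReal.ofReal_lt_top⟩
  exact mem_of_superset (inter_mem_nhdsWithin _ (ball_mem_nhds y hr)) fun z hz => ⟨hz.2, hz.1.2⟩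

lemma setLIntegral_ball_dist_rpow {a : ℝ} (x : Euc n) (r : ℝ) :
    ∫⁻ y in ball x r, ENNReal.ofReal ((dist x y / 2) ^ a) =
      ∫⁻ y in ball (0 : Euc n) r, ENNReal.ofReal ((‖y‖ / 2) ^ a) := by
  rw [← lintegral_indicator measurableSet_ball, ← lintegral_indicator measurableSet_ball,
    ← lintegral_add_left_eq_self _ x]
  refine lintegral_congr fun y => ?_
  simp [indicator]

lemma setLIntegral_ball_norm_rpow_lt_top {a : ℝ} (hn : 1 ≤ n) (ha : -(n : ℝ) < a) (r : ℝ) :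
    ∫⁻ y in ball (0 : Euc n) r, ENNReal.ofReal ((‖y‖ / 2) ^ a) < ⊤ := by
  have h : IntegrableOn (fun y : Euc n => (‖y‖ / 2) ^ a) (ball 0 r) volume := by
    refine integrableOn_ball_of_norm_le_rpow (C := 2 ^ (-a)) (α := -a) (by simpa) (by simp; linarith)
      (ae_of_all _ fun y => ?_)
      (Measurable.pow_const (by fun_prop) a).aestronglyMeasurable
    rw [Real.norm_of_nonneg (by positivity), Real.div_rpow (norm_nonneg _) two_pos.le, neg_neg,
      Real.rpow_neg two_pos.le, div_eq_inv_mul]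
  simpa [hasFiniteIntegral_iff_ofReal
    (ae_of_all _ fun y : Euc n => Real.rpow_nonneg (by positivity : (0 : ℝ) ≤ ‖y‖ / 2) a)] using h.2

lemma AhlforsRegular.setLIntegral_bd_rpow_lt_top_of_nonpos (h : AhlforsRegular d A₀ (frontier Ω))
    (hΩ : IsOpen Ω) (hd0 : 0 < d) (hdn : d < n) {ξ : Euc n} (hξ : ξ ∈ frontier Ω)
    {R : ℝ} (hR : 0 < R) (hRd : ENNReal.ofReal (R / 2) ≤ EMetric.diam (frontier Ω))
    {s : ℝ} (hs : -(n - d) < s) (hs0 : s ≤ 0) :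
    ∫⁻ y in ball ξ R ∩ Ω, ENNReal.ofReal (bd Ω y ^ s) < ⊤ := by
  obtain ⟨hne, hA, hreg⟩ := id h
  have hn : 1 ≤ n := by
    have : (0 : ℝ) < n := hd0.trans hdn
    exact_mod_cast this
  set Γ' := ball ξ (3 * R) ∩ frontier Ω with hΓ'
  have hΓt : hm n d Γ' < ⊤ := (measure_mono (inter_subset_inter_left _ ball_subset_closedBall)).trans_lt
    (h.hm_inter_closedBall_lt_top isClosed_frontier (half_pos hR) hRd ξ (3 * R))
  have hVm : MeasurableSet (ball ξ R ∩ Ω) := measurableSet_ball.inter hΩ.measurableSet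
  have : IsFiniteMeasure ((hm n d).restrict Γ') := ⟨by simpa using hΓt⟩
  let K : Euc n → Euc n → ℝ≥0∞ := fun y x =>
    {q : Euc n × Euc n | dist q.2 q.1 < 2 * R}.indicator
      (fun q => ENNReal.ofReal ((dist q.2 q.1 / 2) ^ (s - d))) (y, x)
  have hK : Measurable (Function.uncurry K) := by
    refine Measurable.indicator (by fun_prop) ?_
    exact measurableSet_lt (by fun_prop) (by fun_prop)
  calc ∫⁻ y in ball ξ R ∩ Ω, ENNReal.ofReal (bd Ω y ^ s)
      ≤ ∫⁻ y in ball ξ R ∩ Ω, ENNReal.ofReal (2 ^ d * A₀) * ∫⁻ x in Γ', K y x ∂(hm n d) := by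
        refine setLIntegral_mono' hVm fun y hy => ?_
        have hδ := bd_pos hΩ hne hy.2
        have hyξ : dist y ξ < R := hy.1
        have hδR : bd Ω y < R := (bd_le_dist hξ).trans_lt hyξ
        obtain ⟨ζ, hζ, hζy⟩ := isClosed_frontier.exists_infDist_eq_dist hne y
        have hζy : bd Ω y = dist y ζ := hζy
        have hσ := (hreg ζ hζ (bd Ω y / 2) (half_pos hδ)
          ((ENNReal.ofReal_le_ofReal (by linarith)).trans hRd)).1
        have hsub : ball ζ (bd Ω y / 2) ∩ frontier Ω ⊆ Γ' := fun x hx => by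
          refine ⟨?_, hx.2⟩
          have h1 : dist x ζ < bd Ω y / 2 := hx.1
          have h2 := dist_triangle4 x ζ y ξ
          rw [dist_comm ζ y] at h2
          rw [mem_ball]; linarith
        calc ENNReal.ofReal (bd Ω y ^ s)
            = ENNReal.ofReal (2 ^ d * A₀) * (ENNReal.ofReal (bd Ω y ^ (s - d)) *
                ENNReal.ofReal ((bd Ω y / 2) ^ d / A₀)) := by
              rw [← ENNReal.ofReal_mul (by positivity), ← ENNReal.ofReal_mul (by positivity),
                Real.rpow_sub hδ, Real.div_rpow hδ.le two_pos.le]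
              congr 1
              have := (Real.rpow_pos_of_pos hδ d).ne'
              have := (Real.rpow_pos_of_pos two_pos d).ne'
              field_simp
          _ ≤ ENNReal.ofReal (2 ^ d * A₀) * (ENNReal.ofReal (bd Ω y ^ (s - d)) *
                hm n d (ball ζ (bd Ω y / 2) ∩ frontier Ω)) := by gcongr
          _ = ENNReal.ofReal (2 ^ d * A₀) * ∫⁻ x in ball ζ (bd Ω y / 2) ∩ frontier Ω,
                ENNReal.ofReal (bd Ω y ^ (s - d)) ∂(hm n d) := by simp
          _ ≤ ENNReal.ofReal (2 ^ d * A₀) * ∫⁻ x in ball ζ (bd Ω y / 2) ∩ frontier Ω,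
                K y x ∂(hm n d) := by
              refine mul_le_mul' le_rfl (setLIntegral_mono'
                (measurableSet_ball.inter isClosed_frontier.measurableSet) fun x hx => ?_)
              have h1 : dist x ζ < bd Ω y / 2 := hx.1
              have h2 := dist_triangle_right x y ζ
              have h3 : bd Ω y ≤ dist x y := by rw [dist_comm]; exact bd_le_dist hx.2
              have h4 : (y, x) ∈ {q : Euc n × Euc n | dist q.2 q.1 < 2 * R} :=
                show dist x y < 2 * R by linarith
              simp only [K]
              rw [indicator_of_mem h4]
              exact ENNReal.ofReal_le_ofReal
                (Real.rpow_le_rpow_of_nonpos (by linarith) (by linarith) (by linarith))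
          _ ≤ _ := mul_le_mul' le_rfl (lintegral_mono_set hsub)
    _ = ENNReal.ofReal (2 ^ d * A₀) *
          ∫⁻ x in Γ', (∫⁻ y in ball ξ R ∩ Ω, K y x) ∂(hm n d) := by
        rw [lintegral_const_mul' _ _ ENNReal.ofReal_ne_top,
          lintegral_lintegral_swap hK.aemeasurable]
    _ ≤ ENNReal.ofReal (2 ^ d * A₀) * ∫⁻ x in Γ',
          (∫⁻ y in ball (0 : Euc n) (2 * R), ENNReal.ofReal ((‖y‖ / 2) ^ (s - d))) ∂(hm n d) := by
        refine mul_le_mul' le_rfl (lintegral_mono fun x => ?_)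
        rw [← setLIntegral_ball_dist_rpow x, ← lintegral_indicator measurableSet_ball]
        refine (lintegral_mono' Measure.restrict_le_self le_rfl).trans_eq
          (lintegral_congr fun y => ?_)
        simp [K, indicator, dist_comm]
    _ < ⊤ := by
        rw [setLIntegral_const]
        exact ENNReal.mul_lt_top ENNReal.ofReal_lt_top (ENNReal.mul_lt_top
          (setLIntegral_ball_norm_rpow_lt_top hn (by linarith) _) hΓt)

lemma AhlforsRegular.setLIntegral_bd_rpow_lt_top (h : AhlforsRegular d A₀ (frontier Ω))
    (hΩ : IsOpen Ω) (hd0 : 0 < d) (hdn : d < n) {ξ : Euc n} (hξ : ξ ∈ frontier Ω)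
    {R : ℝ} (hR : 0 < R) (hRd : ENNReal.ofReal (R / 2) ≤ EMetric.diam (frontier Ω))
    {s : ℝ} (hs : -(n - d) < s) :
    ∫⁻ y in ball ξ R ∩ Ω, ENNReal.ofReal (bd Ω y ^ s) < ⊤ := by
  rcases le_total s 0 with hs0 | hs0
  · exact h.setLIntegral_bd_rpow_lt_top_of_nonpos hΩ hd0 hdn hξ hR hRd hs hs0
  refine (setLIntegral_mono' (measurableSet_ball.inter hΩ.measurableSet)
    (g := fun _ => ENNReal.ofReal (R ^ s)) fun y hy => ENNReal.ofReal_le_ofReal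
      (Real.rpow_le_rpow infDist_nonneg ((bd_le_dist hξ).trans hy.1.le) hs0)).trans_lt ?_
  rw [setLIntegral_const]
  exact ENNReal.mul_lt_top ENNReal.ofReal_lt_top
    ((measure_mono inter_subset_left).trans_lt measure_ball_lt_top)

end Regularity

section Trace

variable {Ω : Set (Euc n)} {c d s q : ℝ} {β : ℝ≥0∞} {u : Euc n → ℝ}

lemma integrableOn_of_setLIntegral_wAvg_lt_top (hΩ : IsOpen Ω) (hc : 0 < c) (hc1 : c < 1)
    (hβ : 1 ≤ β) (hu : AEStronglyMeasurable u (volume.restrict Ω)) {ξ : Euc n}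
    (hξ : ξ ∈ frontier Ω) {R : ℝ} (hR : 0 < R)
    (h : ∫⁻ y in ball ξ R ∩ Ω, wAvg Ω c β u y < ⊤) {K : Set (Euc n)} (hKR : K ⊆ ball ξ R)
    (hK : IsCompact K) : IntegrableOn u (K ∩ Ω) volume := by
  refine ⟨hu.mono_measure (Measure.restrict_mono inter_subset_right le_rfl), ?_⟩
  obtain ⟨R', hR', hKR'⟩ := exists_lt_subset_ball hK.isClosed hKR
  have ht : 0 < min (c / 2) ((R - R') / R) :=
    lt_min (half_pos hc) (div_pos (sub_pos.2 hR') hR)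
  have key := setLIntegral_enorm_le_wAvg hΩ ⟨ξ, hξ⟩ hc hc1 hβ hu ht (min_le_left _ _)
    (hK.measurableSet.inter hΩ.measurableSet) (measurableSet_ball.inter hΩ.measurableSet)
    inter_subset_right inter_subset_right (U := ball ξ R ∩ Ω) (E := K ∩ Ω) fun z hz => by
      have hδ := bd_pos hΩ ⟨ξ, hξ⟩ hz.2
      have hzξ : dist z ξ < R' := hKR' hz.1
      have h1 : bd Ω z ≤ dist z ξ := bd_le_dist hξ
      have h2 : min (c / 2) ((R - R') / R) ≤ c / 2 := min_le_left _ _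
      have h3 : min (c / 2) ((R - R') / R) * R ≤ R - R' := by
        rw [← le_div_iff₀ hR]; exact min_le_right _ _
      refine subset_inter (ball_subset_ball' ?_)
        ((ball_subset_ball (by nlinarith)).trans (ball_bd_subset hΩ hz.2))
      nlinarith
  by_contra htop
  rw [hasFiniteIntegral_iff_enorm, not_lt_top_iff] at htop
  rw [htop, ENNReal.top_mul (by simp; positivity)] at key
  exact (key.trans_lt h).ne rfl

lemma trZeroAt_of_eventually_setLIntegral_enorm_le
    (hu : AEStronglyMeasurable u (volume.restrict Ω)) {x : Euc n}
    (h : ∀ ε > 0, ∀ᶠ r in 𝓝[>] (0 : ℝ),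
      ∫⁻ y in ball x r ∩ Ω, ‖u y‖ₑ ≤ ENNReal.ofReal (ε * r ^ n)) : TrZeroAt Ω u x := by
  refine Metric.tendsto_nhds.2 fun ε hε => ?_
  filter_upwards [h (ε / 2) (half_pos hε), self_mem_nhdsWithin] with r hr hr0
  have hr0 : 0 < r := hr0
  have h1 : ∫ y in ball x r ∩ Ω, |u y| ≤ ε / 2 * r ^ n := by
    have := integral_norm_eq_lintegral_enorm
      (hu.mono_measure (Measure.restrict_mono (inter_subset_right (s := ball x r)) le_rfl))
    simp only [Real.norm_eq_abs] at this
    rw [this]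
    exact ENNReal.toReal_le_of_le_ofReal (by positivity) hr
  have h0 : 0 ≤ ∫ y in ball x r ∩ Ω, |u y| := integral_nonneg fun _ => abs_nonneg _
  rw [Real.dist_eq, sub_zero, abs_of_nonneg (by positivity), one_div, inv_mul_lt_iff₀ (by positivity)]
  nlinarith [pow_pos hr0 n]

lemma trZeroAt_of_eventually_setLIntegral_wAvg_le (hΩ : IsOpen Ω) (hc : 0 < c) (hc1 : c < 1)
    (hβ : 1 ≤ β) (hu : AEStronglyMeasurable u (volume.restrict Ω)) {x : Euc n}
    (hx : x ∈ frontier Ω)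
    (h : ∀ ε > 0, ∀ᶠ r in 𝓝[>] (0 : ℝ),
      ∫⁻ y in ball x r ∩ Ω, wAvg Ω c β u y ≤ ENNReal.ofReal (ε * r ^ n)) : TrZeroAt Ω u x := by
  refine trZeroAt_of_eventually_setLIntegral_enorm_le hu fun ε hε => ?_
  have hlim : Tendsto (fun r : ℝ => 2 * r) (𝓝[>] 0) (𝓝[>] 0) := by
    refine tendsto_nhdsWithin_iff.2 ⟨?_, eventually_mem_nhdsWithin.mono fun r hr => ?_⟩
    · exact ((continuous_const_mul (2 : ℝ)).tendsto' 0 0 (by simp)).mono_left nhdsWithin_le_nhds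
    · exact mul_pos two_pos (mem_Ioi.1 hr)
  filter_upwards [hlim.eventually (h (ε * (c / 8) ^ n) (by positivity)),
    self_mem_nhdsWithin] with r hr hr0
  have hr0 : 0 < r := hr0
  have key := setLIntegral_enorm_le_wAvg hΩ ⟨x, hx⟩ hc hc1 hβ hu (half_pos hc) le_rfl
    (measurableSet_ball.inter hΩ.measurableSet) (measurableSet_ball.inter hΩ.measurableSet)
    inter_subset_right inter_subset_right (U := ball x (2 * r) ∩ Ω) (E := ball x r ∩ Ω)
    fun z hz => by
      have hδ := bd_pos hΩ ⟨x, hx⟩ hz.2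
      have hzx : dist z x < r := hz.1
      have h1 : bd Ω z ≤ dist z x := bd_le_dist hx
      refine subset_inter (ball_subset_ball' ?_)
        ((ball_subset_ball (by nlinarith)).trans (ball_bd_subset hΩ hz.2))
      nlinarith
  have h2 : ENNReal.ofReal (ε * (c / 8) ^ n * (2 * r) ^ n) =
      ENNReal.ofReal (ε * r ^ n) * ENNReal.ofReal ((c / 2 / 2) ^ n) := by
    rw [← ENNReal.ofReal_mul (by positivity), mul_assoc, mul_assoc, ← mul_pow, ← mul_pow]
    congr 3; ring
  rw [h2] at hr
  exact (ENNReal.mul_le_mul_iff_left (by simp; positivity) ENNReal.ofReal_ne_top).1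
    (key.trans hr)

lemma eventually_ball_subset_ball {x ξ : Euc n} {R : ℝ} (hx : x ∈ ball ξ R) :
    ∀ᶠ r in 𝓝[>] (0 : ℝ), ball x r ⊆ ball ξ R := by
  have h : 0 < R - dist x ξ := sub_pos.2 hx
  filter_upwards [nhdsWithin_le_nhds (Iio_mem_nhds h)] with r hr
  have hr : r < R - dist x ξ := hr
  exact ball_subset_ball' (by linarith)

lemma trZeroAt_of_wAvg_le (hΩ : IsOpen Ω) (hc : 0 < c) (hc1 : c < 1)
    (hβ : 1 ≤ β) (hu : AEStronglyMeasurable u (volume.restrict Ω)) {x ξ : Euc n} {R : ℝ}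
    (hx : x ∈ frontier Ω) (hxξ : x ∈ ball ξ R) (hs : 0 < s) {M : ℝ} (hM : 0 ≤ M)
    (h : ∀ y ∈ ball ξ R ∩ Ω, wAvg Ω c β u y ≤ ENNReal.ofReal (M * bd Ω y ^ s)) :
    TrZeroAt Ω u x := by
  refine trZeroAt_of_eventually_setLIntegral_wAvg_le hΩ hc hc1 hβ hu hx fun ε hε => ?_
  set ω := (volume (ball (0 : Euc n) 1)).toReal with hω
  have hω0 : 0 ≤ ω := ENNReal.toReal_nonneg
  have hlim : Tendsto (fun r : ℝ => M * ω * r ^ s) (𝓝[>] 0) (𝓝 0) := by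
    have : Tendsto (fun r : ℝ => r ^ s) (𝓝[>] 0) (𝓝 0) :=
      ((Real.continuousAt_rpow_const 0 s (Or.inr hs.le)).tendsto.mono_left
        nhdsWithin_le_nhds).trans (by simp [Real.zero_rpow hs.ne'])
    simpa using this.const_mul (M * ω)
  filter_upwards [hlim.eventually (gt_mem_nhds hε), eventually_ball_subset_ball hxξ,
    self_mem_nhdsWithin] with r hr hsub hr0
  have hr0 : 0 < r := hr0
  calc ∫⁻ y in ball x r ∩ Ω, wAvg Ω c β u y
      ≤ ∫⁻ y in ball x r ∩ Ω, ENNReal.ofReal (M * r ^ s) := by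
        refine setLIntegral_mono' (measurableSet_ball.inter hΩ.measurableSet) fun y hy => ?_
        refine (h y ⟨hsub hy.1, hy.2⟩).trans (ENNReal.ofReal_le_ofReal ?_)
        have : bd Ω y ≤ r := (bd_le_dist hx).trans hy.1.le
        exact mul_le_mul_of_nonneg_left (Real.rpow_le_rpow infDist_nonneg this hs.le) hM
    _ ≤ ENNReal.ofReal (M * r ^ s) * volume (ball x r) := by
        rw [setLIntegral_const]
        gcongr
        exact inter_subset_left
    _ = ENNReal.ofReal (M * ω * r ^ s * r ^ n) := by
        rw [Measure.addHaar_ball_of_pos volume x hr0, ← ENNReal.ofReal_toReal measure_ball_lt_top.ne,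
          ← hω, ← ENNReal.ofReal_mul (by positivity), ← ENNReal.ofReal_mul (by positivity)]
        congr 1
        simp; ring
    _ ≤ ENNReal.ofReal (ε * r ^ n) := by gcongr

lemma le_add_rpow_one_sub_mul_rpow (w : ℝ≥0∞) {l : ℝ} (hl : 0 < l) (hq : 1 ≤ q) :
    w ≤ ENNReal.ofReal l + ENNReal.ofReal (l ^ (1 - q)) * w ^ q := by
  rcases le_or_gt w (ENNReal.ofReal l) with h | h
  · exact h.trans le_self_add
  refine le_trans ?_ le_add_self
  have hq' : w ^ (q - 1) * w = w ^ q := by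
    nth_rewrite 2 [← ENNReal.rpow_one w]
    rw [← ENNReal.rpow_add_of_nonneg _ _ (by linarith) zero_le_one, sub_add_cancel]
  calc w = ENNReal.ofReal (l ^ (1 - q)) * ENNReal.ofReal (l ^ (q - 1)) * w := by
        rw [← ENNReal.ofReal_mul (by positivity), ← Real.rpow_add hl]; simp
    _ ≤ ENNReal.ofReal (l ^ (1 - q)) * w ^ (q - 1) * w := by
        rw [← ENNReal.ofReal_rpow_of_pos hl (p := q - 1)]
        gcongr
    _ = _ := by rw [mul_assoc, hq']

/-- The measure on `V` with density `(W_{c,β} u)^q δ^{d-n-qs}`. -/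
def avMeasure (Ω V : Set (Euc n)) (d c s q : ℝ) (β : ℝ≥0∞) (u : Euc n → ℝ) : Measure (Euc n) :=
  (volume.restrict V).withDensity fun y =>
    wAvg Ω c β u y ^ q * ENNReal.ofReal (bd Ω y ^ (d - n - q * s))

lemma avMeasure_apply_of_subset {V S : Set (Euc n)} (hS : MeasurableSet S) (hSV : S ⊆ V) :
    avMeasure Ω V d c s q β u S =
      ∫⁻ y in S, wAvg Ω c β u y ^ q * ENNReal.ofReal (bd Ω y ^ (d - n - q * s)) := by
  rw [avMeasure, withDensity_apply _ hS, Measure.restrict_restrict hS, inter_eq_left.2 hSV]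

lemma avMeasure_frontier (hΩ : IsOpen Ω) {V : Set (Euc n)} (hV : V ⊆ Ω) :
    avMeasure Ω V d c s q β u (frontier Ω) = 0 := by
  refine withDensity_absolutelyContinuous _ _ ?_
  rw [Measure.restrict_apply isClosed_frontier.measurableSet]
  have : frontier Ω ∩ V ⊆ ∅ := by
    rw [← hΩ.inter_frontier_eq, inter_comm Ω]
    exact inter_subset_inter_right _ hV
  rw [subset_empty_iff.1 this, measure_empty]

lemma setLIntegral_wAvg_lt_top (hΩ : IsOpen Ω) {ξ : Euc n} (hξ : ξ ∈ frontier Ω) {R : ℝ}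
    (hR : 0 < R) (hq : 1 ≤ q) (hs : -(n - d) < s)
    (hJ : ∫⁻ y in ball ξ R ∩ Ω, ENNReal.ofReal (bd Ω y ^ s) < ⊤)
    (h : avMeasure Ω (ball ξ R ∩ Ω) d c s q β u (ball ξ R ∩ Ω) < ⊤) :
    ∫⁻ y in ball ξ R ∩ Ω, wAvg Ω c β u y < ⊤ := by
  have hV : MeasurableSet (ball ξ R ∩ Ω) := measurableSet_ball.inter hΩ.measurableSet
  rw [avMeasure_apply_of_subset hV le_rfl] at h
  have hm : Measurable fun y => ENNReal.ofReal (bd Ω y ^ s) :=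
    (continuous_bd.measurable.pow_const s).ennreal_ofReal
  refine (setLIntegral_mono' hV fun y hy => ?_).trans_lt (b := ∫⁻ y in ball ξ R ∩ Ω,
    (ENNReal.ofReal (bd Ω y ^ s) + ENNReal.ofReal (R ^ (s + n - d)) *
      (wAvg Ω c β u y ^ q * ENNReal.ofReal (bd Ω y ^ (d - n - q * s))))) ?_
  · have hδ := bd_pos hΩ ⟨ξ, hξ⟩ hy.2
    have hδR : bd Ω y ≤ R := (bd_le_dist hξ).trans hy.1.le
    refine (le_add_rpow_one_sub_mul_rpow _ (Real.rpow_pos_of_pos hδ s) hq).trans ?_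
    rw [mul_comm (wAvg Ω c β u y ^ q), ← mul_assoc, ← ENNReal.ofReal_mul (by positivity)]
    gcongr
    calc (bd Ω y ^ s) ^ (1 - q) = bd Ω y ^ (s + n - d) * bd Ω y ^ (d - n - q * s) := by
          rw [← Real.rpow_mul hδ.le, ← Real.rpow_add hδ]
          congr 1; ring
      _ ≤ _ := by gcongr; linarith
  · rw [lintegral_add_left hm, lintegral_const_mul' _ _ ENNReal.ofReal_ne_top]
    exact ENNReal.add_lt_top.2 ⟨hJ, ENNReal.mul_lt_top ENNReal.ofReal_lt_top h⟩

lemma trZeroAt_of_eventually_avMeasure_le (hΩ : IsOpen Ω) (hc : 0 < c) (hc1 : c < 1)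
    (hβ : 1 ≤ β) (hu : AEStronglyMeasurable u (volume.restrict Ω)) {x ξ : Euc n} {R : ℝ}
    (hx : x ∈ frontier Ω) (hxξ : x ∈ ball ξ R) (hq : 1 ≤ q) (hdn : d < n) (hs : 0 ≤ s)
    (h : ∀ η > 0, ∀ᶠ r in 𝓝[>] (0 : ℝ),
      avMeasure Ω (ball ξ R ∩ Ω) d c s q β u (ball x r) ≤ ENNReal.ofReal (η * r ^ (d - q * s))) :
    TrZeroAt Ω u x := by
  refine trZeroAt_of_eventually_setLIntegral_wAvg_le hΩ hc hc1 hβ hu hx fun ε hε => ?_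
  set ω := (volume (ball (0 : Euc n) 1)).toReal with hω
  have hω0 : 0 ≤ ω := ENNReal.toReal_nonneg
  obtain ⟨l, hl, hlε⟩ : ∃ l > 0, l * (ω + 1) = ε := ⟨ε / (ω + 1), by positivity, by field_simp⟩
  filter_upwards [h (l ^ q) (by positivity), eventually_ball_subset_ball hxξ,
    self_mem_nhdsWithin] with r hr hsub hr0
  have hr0 : 0 < r := hr0
  have hVm : MeasurableSet (ball x r ∩ Ω) := measurableSet_ball.inter hΩ.measurableSet
  calc ∫⁻ y in ball x r ∩ Ω, wAvg Ω c β u y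
      ≤ ∫⁻ y in ball x r ∩ Ω, (ENNReal.ofReal l +
          ENNReal.ofReal (l ^ (1 - q) * r ^ (n - d + q * s)) *
          (wAvg Ω c β u y ^ q * ENNReal.ofReal (bd Ω y ^ (d - n - q * s)))) := by
        refine setLIntegral_mono' hVm fun y hy => ?_
        have hδ := bd_pos hΩ ⟨x, hx⟩ hy.2
        have hδr : bd Ω y ≤ r := (bd_le_dist hx).trans hy.1.le
        refine (le_add_rpow_one_sub_mul_rpow _ hl hq).trans ?_
        rw [mul_comm (wAvg Ω c β u y ^ q), ← mul_assoc, ← ENNReal.ofReal_mul (by positivity)]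
        gcongr
        calc l ^ (1 - q)
            = l ^ (1 - q) * (bd Ω y ^ (n - d + q * s) * bd Ω y ^ (d - n - q * s)) := by
              rw [← Real.rpow_add hδ]
              simp
          _ ≤ l ^ (1 - q) * (r ^ (n - d + q * s) * bd Ω y ^ (d - n - q * s)) := by
              gcongr
          _ = _ := (mul_assoc _ _ _).symm
    _ ≤ ENNReal.ofReal l * volume (ball x r) +
          ENNReal.ofReal (l ^ (1 - q) * r ^ (n - d + q * s)) *
          avMeasure Ω (ball ξ R ∩ Ω) d c s q β u (ball x r) := by
        rw [lintegral_add_left measurable_const, setLIntegral_const,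
          lintegral_const_mul' _ _ ENNReal.ofReal_ne_top,
          ← avMeasure_apply_of_subset hVm (inter_subset_inter_left _ hsub)]
        gcongr <;> exact inter_subset_left
    _ ≤ ENNReal.ofReal l * volume (ball x r) +
          ENNReal.ofReal (l ^ (1 - q) * r ^ (n - d + q * s)) *
          ENNReal.ofReal (l ^ q * r ^ (d - q * s)) := by gcongr
    _ = ENNReal.ofReal (ε * r ^ n) := by
        rw [Measure.addHaar_ball_of_pos volume x hr0, ← ENNReal.ofReal_toReal measure_ball_lt_top.ne,
          ← hω, ← ENNReal.ofReal_mul (by positivity), ← ENNReal.ofReal_mul (by positivity),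
          ← ENNReal.ofReal_mul (by positivity), ← ENNReal.ofReal_add (by positivity) (by positivity),
          ← hlε]
        congr 1
        have h1 : l ^ (1 - q) * l ^ q = l := by rw [← Real.rpow_add hl]; simp
        have h2 : r ^ (n - d + q * s) * r ^ (d - q * s) = r ^ n := by
          rw [← Real.rpow_add hr0, ← Real.rpow_natCast]; congr 1; ring
        rw [mul_mul_mul_comm, h1, h2]
        simp; ring

lemma AhlforsRegular.hm_setOf_frequently_lt_measure_ball_eq_zero {A₀ : ℝ} {Γ : Set (Euc n)}
    (h : AhlforsRegular d A₀ Γ) (hΓ : IsClosed Γ) {r₀ : ℝ} (hr₀ : 0 < r₀)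
    (hrd : ENNReal.ofReal r₀ ≤ EMetric.diam Γ) (m : Measure (Euc n)) [IsFiniteMeasure m]
    (hm0 : m Γ = 0) {η : ℝ} (hη : 0 < η) :
    hm n d {x ∈ Γ | ∃ᶠ r in 𝓝[>] (0 : ℝ), ENNReal.ofReal (η * r ^ d) < m (ball x r)} = 0 := by
  obtain ⟨-, hA, hreg⟩ := id h
  set E := {x ∈ Γ | ∃ᶠ r in 𝓝[>] (0 : ℝ), ENNReal.ofReal (η * r ^ d) < m (ball x r)}
  have hlim : Tendsto (fun ε => ENNReal.ofReal (A₀ * 5 ^ d / η) * m (thickening ε Γ))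
      (𝓝[>] 0) (𝓝 0) := by
    have := tendsto_measure_thickening_of_isClosed (μ := m) ⟨1, one_pos, measure_ne_top _ _⟩ hΓ
    rw [hm0] at this
    simpa using ENNReal.Tendsto.const_mul this (Or.inr ENNReal.ofReal_ne_top)
  refine le_antisymm (ge_of_tendsto hlim ?_) zero_le
  filter_upwards [self_mem_nhdsWithin,
    nhdsWithin_le_nhds (Iio_mem_nhds (by positivity : 0 < r₀ / 5))] with ε hε hεr
  have hεr : ε < r₀ / 5 := hεr
  let t : Set (Euc n × ℝ) :=
    {b | b.1 ∈ Γ ∧ 0 < b.2 ∧ b.2 < ε ∧ ENNReal.ofReal (η * b.2 ^ d) < m (ball b.1 b.2)}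
  obtain ⟨v, hvt, hdisj, hcov⟩ := Vitali.exists_disjoint_subfamily_covering_enlargement_ball
    t Prod.fst Prod.snd ε (fun b hb => hb.2.2.1.le) 5 (by norm_num)
  have hv : v.Countable := hdisj.countable_of_isOpen (fun _ _ => isOpen_ball)
    fun b hb => nonempty_ball.2 (hvt hb).2.1
  have hEcov : E ⊆ ⋃ b ∈ v, ball b.1 (5 * b.2) ∩ Γ := by
    rintro x ⟨hxΓ, hx⟩
    have hev : ∀ᶠ r in 𝓝[>] (0 : ℝ), r < ε ∧ 0 < r := by
      filter_upwards [nhdsWithin_le_nhds (Iio_mem_nhds (mem_Ioi.1 hε)), self_mem_nhdsWithin]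
        with r h1 h2
      exact ⟨h1, h2⟩
    obtain ⟨r, hr, hrε, hr0⟩ := (hx.and_eventually hev).exists
    obtain ⟨b, hb, hxb⟩ := hcov (x, r) ⟨hxΓ, hr0, hrε, hr⟩
    exact mem_iUnion₂.2 ⟨b, hb, hxb (mem_ball_self hr0), hxΓ⟩
  calc hm n d E ≤ ∑' b : v, hm n d (ball b.1.1 (5 * b.1.2) ∩ Γ) :=
        (measure_mono hEcov).trans (measure_biUnion_le _ hv _)
    _ ≤ ∑' b : v, ENNReal.ofReal (A₀ * 5 ^ d / η) * m (ball b.1.1 b.1.2) := by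
        refine ENNReal.tsum_le_tsum fun b => ?_
        obtain ⟨hbΓ, hb0, hbε, hb⟩ := hvt b.2
        refine (hreg _ hbΓ (5 * b.1.2) (by positivity)
          ((ENNReal.ofReal_le_ofReal (by linarith)).trans hrd)).2.trans ?_
        calc ENNReal.ofReal (A₀ * (5 * b.1.2) ^ d)
            = ENNReal.ofReal (A₀ * 5 ^ d / η) * ENNReal.ofReal (η * b.1.2 ^ d) := by
              rw [← ENNReal.ofReal_mul (by positivity), Real.mul_rpow (by norm_num) hb0.le]
              congr 1
              field_simp
          _ ≤ _ := by gcongr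
    _ = ENNReal.ofReal (A₀ * 5 ^ d / η) * m (⋃ b ∈ v, ball b.1 b.2) := by
        rw [ENNReal.tsum_mul_left, measure_biUnion hv hdisj fun _ _ => measurableSet_ball]
    _ ≤ ENNReal.ofReal (A₀ * 5 ^ d / η) * m (thickening ε Γ) := by
        gcongr
        refine iUnion₂_subset fun b hb => ?_
        exact (ball_subset_ball (hvt hb).2.2.1.le).trans (ball_subset_thickening (hvt hb).1 ε)

end Trace


lemma wAvg_le_of_mul_rpow_neg_le {Ω : Set (Euc n)} {c s M : ℝ} {β : ℝ≥0∞} {u : Euc n → ℝ}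
    {y : Euc n} (hδ : 0 < bd Ω y)
    (h : wAvg Ω c β u y * ENNReal.ofReal (bd Ω y) ^ (-s) ≤ ENNReal.ofReal M) :
    wAvg Ω c β u y ≤ ENNReal.ofReal (M * bd Ω y ^ s) := by
  have hs : (0 : ℝ) ≤ bd Ω y ^ s := by positivity
  calc wAvg Ω c β u y
      = wAvg Ω c β u y * ENNReal.ofReal (bd Ω y) ^ (-s) * ENNReal.ofReal (bd Ω y ^ s) := by
        rw [ENNReal.ofReal_rpow_of_pos hδ, mul_assoc, ← ENNReal.ofReal_mul (by positivity),
          ← Real.rpow_add hδ]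
        simp
    _ ≤ ENNReal.ofReal M * ENNReal.ofReal (bd Ω y ^ s) := by gcongr
    _ = _ := (ENNReal.ofReal_mul' hs).symm

/-- Lemma: a sufficient condition for trace zero. -/
theorem statement_14 (n : ℕ) (d A₀ c s : ℝ) (β p : ℝ≥0∞)
    (hd0 : 0 < d) (hdn : d < n) (hc : 0 < c) (hc1 : c < 1) (hβ : 1 ≤ β) (hp : 1 ≤ p)
    (Ω : Set (Euc n)) (hΩ : IsOpen Ω) (hahl : AhlforsRegular d A₀ (frontier Ω))
    (ξ : Euc n) (hξ : ξ ∈ frontier Ω) (R : ℝ) (hR : 0 < R)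
    (hRd : ENNReal.ofReal R < 2 * EMetric.diam (frontier Ω))
    (u : Euc n → ℝ) (hu : MemLLoc Ω β u)
    (hfin : avNormOn Ω (Metric.ball ξ R ∩ Ω) d c β p (s + 1) u < ⊤) :
    (-(((n : ℝ) - d)) < s →
      ∀ K : Set (Euc n), K ⊆ Metric.ball ξ R → IsCompact K →
        IntegrableOn u (K ∩ Ω) volume) ∧
    ((p = ⊤ ∧ 0 < s) ∨ (p ≠ ⊤ ∧ d / p.toReal ≤ s) →
      ∀ x ∈ Metric.ball ξ R ∩ frontier Ω, TrZeroAt Ω u x) ∧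
    (p ≠ ⊤ → 0 ≤ s →
      ∀ᵐ x ∂(hm n d).restrict (Metric.ball ξ R ∩ frontier Ω), TrZeroAt Ω u x) := by
  have hu := hu.1
  have hne : (frontier Ω).Nonempty := ⟨ξ, hξ⟩
  have hV : MeasurableSet (Metric.ball ξ R ∩ Ω) :=
    measurableSet_ball.inter hΩ.measurableSet
  have hRd : ENNReal.ofReal (R / 2) ≤ EMetric.diam (frontier Ω) := by
    have h2 : ENNReal.ofReal R = 2 * ENNReal.ofReal (R / 2) := by
      rw [← ENNReal.ofReal_ofNat 2, ← ENNReal.ofReal_mul (by norm_num)]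
      congr 1; ring
    rw [h2] at hRd
    exact ((ENNReal.mul_lt_mul_iff_right (by norm_num) (by norm_num)).1 hRd).le
  have hJ : -((n : ℝ) - d) < s →
      ∫⁻ y in Metric.ball ξ R ∩ Ω, ENNReal.ofReal (bd Ω y ^ s) < ⊤ :=
    hahl.setLIntegral_bd_rpow_lt_top hΩ hd0 hdn hξ hR hRd
  rcases eq_or_ne p ⊤ with rfl | hptop
  · rw [avNormOn, if_pos rfl] at hfin
    set S := ⨆ y ∈ Metric.ball ξ R ∩ Ω,
      wAvg Ω c β u y * ENNReal.ofReal (bd Ω y) ^ (1 - (s + 1))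
    have hW : ∀ y ∈ Metric.ball ξ R ∩ Ω,
        wAvg Ω c β u y ≤ ENNReal.ofReal (S.toReal * bd Ω y ^ s) := fun y hy => by
      refine wAvg_le_of_mul_rpow_neg_le (bd_pos hΩ hne hy.2) ?_
      rw [ENNReal.ofReal_toReal hfin.ne, show -s = 1 - (s + 1) by ring]
      exact le_iSup₂_of_le y hy le_rfl
    refine ⟨fun hs K hKR hK => ?_, ?_, fun h => absurd rfl h⟩
    · refine integrableOn_of_setLIntegral_wAvg_lt_top hΩ hc hc1 hβ hu hξ hR ?_ hKR hK
      refine (setLIntegral_mono' hV hW).trans_lt ?_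
      simp_rw [ENNReal.ofReal_mul ENNReal.toReal_nonneg]
      rw [lintegral_const_mul' _ _ ENNReal.ofReal_ne_top]
      exact ENNReal.mul_lt_top ENNReal.ofReal_lt_top (hJ hs)
    · rintro (⟨-, hs⟩ | ⟨h, -⟩) x hx
      · exact trZeroAt_of_wAvg_le hΩ hc hc1 hβ hu hx.2 hx.1 hs ENNReal.toReal_nonneg hW
      · exact absurd rfl h
  set q := p.toReal with hq
  have hq1 : 1 ≤ q := by
    rw [hq, ← ENNReal.toReal_one]
    exact ENNReal.toReal_mono hptop hp
  set m := avMeasure Ω (Metric.ball ξ R ∩ Ω) d c s q β u with hm_def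
  have hmV : m (Metric.ball ξ R ∩ Ω) < ⊤ := by
    rw [avNormOn, if_neg hptop, ← hq, ENNReal.rpow_lt_top_iff_of_pos (by positivity)] at hfin
    rw [hm_def, avMeasure_apply_of_subset hV le_rfl]
    refine (setLIntegral_congr_fun hV fun y hy => ?_).trans_lt hfin
    rw [ENNReal.ofReal_rpow_of_pos (bd_pos hΩ hne hy.2)]
    congr 3; ring
  have : IsFiniteMeasure m := by
    refine ⟨?_⟩
    rw [hm_def, avMeasure_apply_of_subset hV le_rfl] at hmV
    rwa [hm_def, avMeasure, withDensity_apply _ MeasurableSet.univ, Measure.restrict_univ]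
  have hm0 : m (frontier Ω) = 0 := avMeasure_frontier hΩ inter_subset_right
  have hr1 : ∀ᶠ r in 𝓝[>] (0 : ℝ), r ≤ 1 :=
    nhdsWithin_le_nhds (Iic_mem_nhds one_pos)
  refine ⟨fun hs K hKR hK => ?_, ?_, fun _ hs => ?_⟩
  · exact integrableOn_of_setLIntegral_wAvg_lt_top hΩ hc hc1 hβ hu hξ hR
      (setLIntegral_wAvg_lt_top hΩ hξ hR hq1 hs (hJ hs) hmV) hKR hK
  · rintro (⟨h, -⟩ | ⟨-, hs⟩) x hx
    · exact absurd h hptop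
    have hs0 : 0 ≤ s := le_trans (by positivity) hs
    have hdq : d - q * s ≤ 0 := by
      rw [div_le_iff₀ (by positivity)] at hs
      linarith
    refine trZeroAt_of_eventually_avMeasure_le hΩ hc hc1 hβ hu hx.2 hx.1 hq1 hdn hs0
      fun η hη => ?_
    have hlim := tendsto_measure_thickening_of_isClosed (μ := m)
      ⟨1, one_pos, measure_ne_top _ _⟩ (isClosed_singleton (x := x))
    rw [measure_mono_null (singleton_subset_iff.2 hx.2) hm0] at hlim
    filter_upwards [hlim.eventually (ge_mem_nhds (ENNReal.ofReal_pos.2 hη)), hr1,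
      self_mem_nhdsWithin] with r hr hr1 hr0
    rw [thickening_singleton] at hr
    refine hr.trans (ENNReal.ofReal_le_ofReal (le_mul_of_one_le_right hη.le ?_))
    exact Real.one_le_rpow_of_pos_of_le_one_of_nonpos hr0 hr1 hdq
  · refine (ae_restrict_iff' (measurableSet_ball.inter isClosed_frontier.measurableSet)).2 ?_
    have hae : ∀ k : ℕ, ∀ᵐ x ∂hm n d, ¬ (x ∈ frontier Ω ∧ ∃ᶠ r in 𝓝[>] (0 : ℝ),
        ENNReal.ofReal (1 / ((k : ℝ) + 1) * r ^ d) < m (ball x r)) := fun k => by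
      refine ae_iff.2 ?_
      simp only [not_not]
      exact hahl.hm_setOf_frequently_lt_measure_ball_eq_zero isClosed_frontier (half_pos hR)
        hRd m hm0 (by positivity)
    filter_upwards [ae_all_iff.2 hae] with x hx hxR
    refine trZeroAt_of_eventually_avMeasure_le hΩ hc hc1 hβ hu hxR.2 hxR.1 hq1 hdn hs
      fun η hη => ?_
    obtain ⟨k, hk⟩ := exists_nat_one_div_lt hη
    filter_upwards [not_frequently.1 fun h => hx k ⟨hxR.2, h⟩, hr1, self_mem_nhdsWithin]
      with r hr hr1 hr0
    have hr0 : 0 < r := hr0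
    refine (not_lt.1 hr).trans (ENNReal.ofReal_le_ofReal ?_)
    have : r ^ d ≤ r ^ (d - q * s) :=
      Real.rpow_le_rpow_of_exponent_ge hr0 hr1 (by nlinarith)
    gcongr

end Paper
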